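/- Let a, b : [0,1] → ℝ be Lipschitz functions, and let Ω = {(s,x) ∈ ℝ² : x ∈ (0,1), a(x) < b(x), a(x) < s < b(x)} be nonempty. Let β be a C¹ function on an open neighborhood of the closure of Ω with β(Ω) ⊂ (0,1) and ∂β/∂s (s,x) ≠ 0 for all (s,x) in the closure of Ω. Let f₁, f₂ : [0,1] → ℝ be C¹ functions with Lipschitz derivatives such that either f₁' > 0 on [0,1] or f₁' < 0 on [0,1]. For x ∈ [0,1] set J(x) = {s ∈ (a(x),b(x)) : f₁(β(s,x)) < f₂(x)} if a(x) < b(x) and J(x) = ∅ otherwise, and let Ω' = {(s,x) : x ∈ (0,1), s ∈ J(x)}. Let α be a C¹ function on an open neighborhood of the closure of Ω' with α(Ω') ⊂ (0,1) and ∂α/∂s (s,x) ≠ 0 for all (s,x) in the closure of Ω', and let k : (0,1) → ℝ be measurable and bounded. Then the linear map K sending f ∈ L²(0,1) to the function Kf(x) = ∫_{J(x)} k(β(s,x)) f(α(s,x)) ds is a well-defined bounded linear operator from L²(0,1) to L²(0,1), and K is a compact operator. -/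

import Mathlib

open MeasureTheory Set

instance : Fact ((1 : ENNReal) ≤ 2) := ⟨by norm_num⟩

/-!
`K` is a Carleman operator: `K f x = φ x f` for functionals `φ x` on `L²(0,1)`. Since `f₁` and
`β(·,x)` are monotone, `J x` is an interval. On it `|∂α/∂s|` is bounded below by a constant `c > 0`
independent of `x`, by compactness of the closure of `Ω'`, so `α(·,x)` expands distances by a factor
at least `c` and pushes Lebesgue measure on `J x` forward to at most `c⁻¹` times Lebesgue measure.
By Cauchy–Schwarz this bounds `‖φ x‖²` by `c⁻¹ ∫_{J x} k(β(s,x))² ds`, which is integrable in `x`.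
Bessel's inequality for each `φ x`, integrated over `x`, then shows that `K` is Hilbert–Schmidt.
-/

open Filter Topology
open scoped ENNReal NNReal

section HilbertSchmidt

variable {𝕜 E ι : Type*} [RCLike 𝕜] [NormedAddCommGroup E] [InnerProductSpace 𝕜 E]

theorem sq_opNorm_le_tsum_sq_norm_apply {F : Type*} [NormedAddCommGroup F] [NormedSpace 𝕜 F]
    (e : HilbertBasis ι 𝕜 E) (T : E →L[𝕜] F) (hT : Summable fun i ↦ ‖T (e i)‖ ^ 2) :
    ‖T‖ ^ 2 ≤ ∑' i, ‖T (e i)‖ ^ 2 := by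
  refine (Real.le_sqrt (norm_nonneg _) (tsum_nonneg fun i ↦ sq_nonneg _)).1 <|
    T.opNorm_le_bound (Real.sqrt_nonneg _) fun f ↦ ?_
  have hsum : HasSum (fun i ↦ e.repr f i • T (e i)) (T f) := by
    simpa only [map_smul] using (e.hasSum_repr f).mapL T
  refine le_of_tendsto hsum.norm (Eventually.of_forall fun t ↦ ?_)
  calc ‖∑ i ∈ t, e.repr f i • T (e i)‖
      ≤ ∑ i ∈ t, ‖T (e i)‖ * ‖inner 𝕜 (e i) f‖ := by
        refine (norm_sum_le _ _).trans_eq (Finset.sum_congr rfl fun i _ ↦ ?_)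
        rw [norm_smul, e.repr_apply_apply, mul_comm]
    _ ≤ √(∑ i ∈ t, ‖T (e i)‖ ^ 2) * √(∑ i ∈ t, ‖inner 𝕜 (e i) f‖ ^ 2) :=
        Real.sum_mul_le_sqrt_mul_sqrt _ _ _
    _ ≤ √(∑' i, ‖T (e i)‖ ^ 2) * ‖f‖ := by
        gcongr
        · exact hT.sum_le_tsum t fun i _ ↦ sq_nonneg _
        · exact Real.sqrt_le_iff.2 ⟨norm_nonneg _, e.orthonormal.sum_inner_products_le f⟩

theorem isCompactOperator_of_summable_sq_norm_apply {F : Type*} [NormedAddCommGroup F]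
    [NormedSpace 𝕜 F] [CompleteSpace F] (e : HilbertBasis ι 𝕜 E) (T : E →L[𝕜] F)
    (hT : Summable fun i ↦ ‖T (e i)‖ ^ 2) : IsCompactOperator T := by
  classical
  let trunc (s : Finset ι) : E →L[𝕜] F := ∑ i ∈ s, InnerProductSpace.rankOne 𝕜 (T (e i)) (e i)
  have trunc_compact (s : Finset ι) : IsCompactOperator (trunc s) :=
    (compactOperator (RingHom.id 𝕜) E F).sum_mem fun i _ ↦
      (isCompactOperator_of_locallyCompactSpace_rng
        (ContinuousLinearMap.toSpanSingleton 𝕜 (T (e i)))).comp_clm (innerSL 𝕜 (e i))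
  have sub_trunc_apply (s : Finset ι) (j : ι) :
      ‖(T - trunc s) (e j)‖ ^ 2 = {i | i ∉ s}.indicator (fun i ↦ ‖T (e i)‖ ^ 2) j := by
    by_cases hj : j ∈ s <;>
      simp [trunc, orthonormal_iff_ite.1 e.orthonormal, hj]
  have sq_norm_sub_trunc_le (s : Finset ι) :
      ‖T - trunc s‖ ^ 2 ≤ ∑' i : {i // i ∉ s}, ‖T (e i)‖ ^ 2 := by
    refine (sq_opNorm_le_tsum_sq_norm_apply e _ ?_).trans_eq ?_
    · simpa only [sub_trunc_apply] using hT.indicator _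
    · simp only [sub_trunc_apply]
      exact (tsum_subtype {i | i ∉ s} fun i ↦ ‖T (e i)‖ ^ 2).symm
  have sq_norm_tendsto : Tendsto (fun s ↦ ‖T - trunc s‖ ^ 2) atTop (𝓝 0) :=
    squeeze_zero (fun s ↦ sq_nonneg _) sq_norm_sub_trunc_le
      (tendsto_tsum_compl_atTop_zero fun i ↦ ‖T (e i)‖ ^ 2)
  refine isCompactOperator_of_tendsto (l := atTop) (F := trunc) ?_ (.of_forall trunc_compact)
  rw [tendsto_iff_norm_sub_tendsto_zero]
  simpa [norm_sub_rev] using sq_norm_tendsto.sqrt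

theorem sum_sq_norm_apply_le_sq_norm [CompleteSpace E] {v : ι → E} (hv : Orthonormal 𝕜 v)
    (φ : StrongDual 𝕜 E) (s : Finset ι) : ∑ i ∈ s, ‖φ (v i)‖ ^ 2 ≤ ‖φ‖ ^ 2 := by
  simpa [norm_inner_symm (v _), InnerProductSpace.toDual_symm_apply] using
    hv.sum_inner_products_le ((InnerProductSpace.toDual 𝕜 E).symm φ) (s := s)

end HilbertSchmidt

section Carleman

variable {𝕜 E X : Type*} [RCLike 𝕜] [NormedAddCommGroup E] [InnerProductSpace 𝕜 E]
  [MeasurableSpace X] {μ : Measure X}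

theorem sq_norm_L2_eq_integral {F : Type*} [NormedAddCommGroup F] (f : Lp F 2 μ) :
    ‖f‖ ^ 2 = ∫ x, ‖f x‖ ^ 2 ∂μ := by
  rw [Lp.norm_def, (Lp.memLp f).eLpNorm_eq_integral_rpow_norm (by norm_num) (by norm_num),
    ENNReal.toReal_ofReal (by positivity), ← Real.rpow_natCast, ← Real.rpow_mul (by positivity)]
  simp

/-- The Carleman operator `f ↦ (x ↦ φ x f)` with values in `L²(μ)`, determined by a family `φ` of
bounded functionals. -/
noncomputable def carlemanMap (φ : X → StrongDual 𝕜 E)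
    (hφ : ∀ f, MemLp (fun x ↦ φ x f) 2 μ) : E →ₗ[𝕜] Lp 𝕜 2 μ where
  toFun f := (hφ f).toLp
  map_add' f g := by
    rw [← MemLp.toLp_add]
    exact MemLp.toLp_congr _ _ (.of_forall fun x ↦ map_add (φ x) f g)
  map_smul' c f := by
    rw [RingHom.id_apply, ← MemLp.toLp_const_smul]
    exact MemLp.toLp_congr _ _ (.of_forall fun x ↦ map_smul (φ x) c f)

theorem coeFn_carlemanMap (φ : X → StrongDual 𝕜 E) (hφ : ∀ f, MemLp (fun x ↦ φ x f) 2 μ) (f : E) :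
    carlemanMap φ hφ f =ᵐ[μ] fun x ↦ φ x f :=
  (hφ f).coeFn_toLp

theorem sq_norm_carlemanMap (φ : X → StrongDual 𝕜 E) (hφ : ∀ f, MemLp (fun x ↦ φ x f) 2 μ)
    (f : E) : ‖carlemanMap φ hφ f‖ ^ 2 = ∫ x, ‖φ x f‖ ^ 2 ∂μ := by
  rw [sq_norm_L2_eq_integral]
  refine integral_congr_ae ?_
  filter_upwards [coeFn_carlemanMap φ hφ f] with x hx
  rw [hx]

theorem exists_isCompactOperator_coeFn_ae_eq [CompleteSpace E] {φ : X → StrongDual 𝕜 E}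
    (hφ : ∀ f, AEStronglyMeasurable (fun x ↦ φ x f) μ) {g : X → ℝ} (hg : Integrable g μ)
    (hφg : ∀ᵐ x ∂μ, ‖φ x‖ ^ 2 ≤ g x) :
    ∃ T : E →L[𝕜] Lp 𝕜 2 μ, IsCompactOperator T ∧ ∀ f, T f =ᵐ[μ] fun x ↦ φ x f := by
  have sq_norm_apply_le (f : E) : ∀ᵐ x ∂μ, ‖φ x f‖ ^ 2 ≤ g x * ‖f‖ ^ 2 := by
    filter_upwards [hφg] with x hx
    calc ‖φ x f‖ ^ 2 ≤ (‖φ x‖ * ‖f‖) ^ 2 := by gcongr; exact (φ x).le_opNorm f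
      _ ≤ g x * ‖f‖ ^ 2 := by rw [mul_pow]; gcongr
  have hint (f : E) : Integrable (fun x ↦ ‖φ x f‖ ^ 2) μ :=
    (hg.mul_const (‖f‖ ^ 2)).mono' ((hφ f).norm.pow 2) <| by
      simpa only [norm_pow, norm_norm] using sq_norm_apply_le f
  have hmem (f : E) : MemLp (fun x ↦ φ x f) 2 μ :=
    (memLp_two_iff_integrable_sq_norm (hφ f)).2 (hint f)
  have norm_le (f : E) : ‖carlemanMap φ hmem f‖ ≤ √(∫ x, g x ∂μ) * ‖f‖ := by
    rw [← Real.sqrt_sq (norm_nonneg f), ← Real.sqrt_mul' _ (sq_nonneg _)]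
    refine Real.le_sqrt_of_sq_le ?_
    rw [sq_norm_carlemanMap, ← integral_mul_const]
    exact integral_mono_ae (hint f) (hg.mul_const _) (sq_norm_apply_le f)
  refine ⟨(carlemanMap φ hmem).mkContinuous _ norm_le, ?_, coeFn_carlemanMap φ hmem⟩
  obtain ⟨w, e, -⟩ := exists_hilbertBasis 𝕜 E
  refine isCompactOperator_of_summable_sq_norm_apply e _
    (summable_of_sum_le (c := ∫ x, g x ∂μ) (fun i ↦ sq_nonneg _) fun s ↦ ?_)
  simp only [LinearMap.mkContinuous_apply, sq_norm_carlemanMap]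
  rw [← integral_finsetSum _ fun i _ ↦ hint (e i)]
  refine integral_mono_ae (integrable_finsetSum _ fun i _ ↦ hint (e i)) hg ?_
  filter_upwards [hφg] with x hx
  exact (sum_sq_norm_apply_le_sq_norm e.orthonormal (φ x) s).trans hx

end Carleman

section WeightedComposition

variable {S Y F : Type*} [MeasurableSpace S] [MeasurableSpace Y] [NormedAddCommGroup F]
  {ν : Measure S} {ρ : Measure Y} {A : S → Y} {C : ℝ≥0}

theorem memLp_comp_of_map_le_smul {p : ℝ≥0∞} (hA : AEMeasurable A ν) (hAρ : ν.map A ≤ C • ρ)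
    {f : Y → F} (hf : MemLp f p ρ) : MemLp (f ∘ A) p ν :=
  ((hf.smul_measure ENNReal.coe_ne_top).mono_measure hAρ).comp_of_map hA

theorem ae_comp_of_map_le_smul (hA : AEMeasurable A ν) (hAρ : ν.map A ≤ C • ρ) {q : Y → Prop}
    (hq : ∀ᵐ y ∂ρ, q y) : ∀ᵐ s ∂ν, q (A s) :=
  ae_of_ae_map hA <| (Measure.absolutelyContinuous_of_le_smul hAρ).ae_le hq

theorem integral_sq_norm_comp_le (hA : AEMeasurable A ν) (hAρ : ν.map A ≤ C • ρ) {f : Y → F}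
    (hf : MemLp f 2 ρ) : ∫ s, ‖f (A s)‖ ^ 2 ∂ν ≤ C * ∫ y, ‖f y‖ ^ 2 ∂ρ := by
  have hfC : MemLp f 2 (C • ρ) := hf.smul_measure ENNReal.coe_ne_top
  have hint : Integrable (fun y ↦ ‖f y‖ ^ 2) (C • ρ) := hfC.integrable_norm_pow two_ne_zero
  calc ∫ s, ‖f (A s)‖ ^ 2 ∂ν = ∫ y, ‖f y‖ ^ 2 ∂ν.map A :=
        (integral_map hA (hint.mono_measure hAρ).1).symm
    _ ≤ ∫ y, ‖f y‖ ^ 2 ∂(C • ρ) :=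
        integral_mono_measure hAρ (.of_forall fun y ↦ sq_nonneg ‖f y‖) hint
    _ = C * ∫ y, ‖f y‖ ^ 2 ∂ρ := integral_smul_nnreal_measure _ C

/-- The composition operator `f ↦ f ∘ A` from `L²(ρ)` to `L²(ν)`, well defined because the
pushforward of `ν` under `A` is dominated by a multiple of `ρ`. -/
noncomputable def compL2 (𝕜 : Type*) [RCLike 𝕜] [NormedSpace 𝕜 F] (hA : AEMeasurable A ν)
    (hAρ : ν.map A ≤ C • ρ) : Lp F 2 ρ →L[𝕜] Lp F 2 ν :=
  LinearMap.mkContinuous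
    { toFun := fun f ↦ (memLp_comp_of_map_le_smul hA hAρ (Lp.memLp f)).toLp
      map_add' := fun f g ↦ by
        rw [← MemLp.toLp_add]
        exact MemLp.toLp_congr _ _ (ae_comp_of_map_le_smul hA hAρ (Lp.coeFn_add f g))
      map_smul' := fun c f ↦ by
        rw [RingHom.id_apply, ← MemLp.toLp_const_smul]
        exact MemLp.toLp_congr _ _ (ae_comp_of_map_le_smul hA hAρ (Lp.coeFn_smul c f)) }
    √C fun f ↦ by
      rw [← Real.sqrt_sq (norm_nonneg f), ← Real.sqrt_mul' _ (sq_nonneg _)]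
      refine Real.le_sqrt_of_sq_le ?_
      rw [sq_norm_L2_eq_integral, sq_norm_L2_eq_integral]
      refine (integral_congr_ae ?_).trans_le (integral_sq_norm_comp_le hA hAρ (Lp.memLp f))
      filter_upwards [(memLp_comp_of_map_le_smul hA hAρ (Lp.memLp f)).coeFn_toLp] with s hs
      exact congrArg (‖·‖ ^ 2) hs

variable {𝕜 : Type*} [RCLike 𝕜]

theorem coeFn_compL2 [NormedSpace 𝕜 F] (hA : AEMeasurable A ν) (hAρ : ν.map A ≤ C • ρ)
    (f : Lp F 2 ρ) : compL2 𝕜 hA hAρ f =ᵐ[ν] f ∘ A :=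
  (memLp_comp_of_map_le_smul hA hAρ (Lp.memLp f)).coeFn_toLp

theorem norm_compL2_le [NormedSpace 𝕜 F] (hA : AEMeasurable A ν) (hAρ : ν.map A ≤ C • ρ) :
    ‖(compL2 𝕜 hA hAρ : Lp F 2 ρ →L[𝕜] Lp F 2 ν)‖ ≤ √C :=
  LinearMap.mkContinuous_norm_le _ (Real.sqrt_nonneg _) _

theorem exists_strongDual_eq_integral_mul_comp (hA : AEMeasurable A ν) (hAρ : ν.map A ≤ C • ρ)
    {w : S → 𝕜} (hw : MemLp w 2 ν) :
    ∃ φ : StrongDual 𝕜 (Lp 𝕜 2 ρ), ‖φ‖ ^ 2 ≤ C * ∫ s, ‖w s‖ ^ 2 ∂ν ∧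
      ∀ f : Lp 𝕜 2 ρ, φ f = ∫ s, w s * f (A s) ∂ν := by
  let v : Lp 𝕜 2 ν := hw.star.toLp
  have hv : v =ᵐ[ν] star w := hw.star.coeFn_toLp
  refine ⟨innerSL 𝕜 v ∘L compL2 𝕜 hA hAρ, ?_, fun f ↦ ?_⟩
  · calc ‖innerSL 𝕜 v ∘L compL2 𝕜 hA hAρ‖ ^ 2 ≤ (‖v‖ * √C) ^ 2 := by
          gcongr
          refine (ContinuousLinearMap.opNorm_comp_le _ _).trans ?_
          gcongr
          · exact (innerSL_apply_norm 𝕜 v).le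
          · exact norm_compL2_le hA hAρ
      _ = C * ∫ s, ‖w s‖ ^ 2 ∂ν := by
          rw [mul_pow, Real.sq_sqrt C.coe_nonneg, mul_comm, sq_norm_L2_eq_integral]
          congr 1
          refine integral_congr_ae ?_
          filter_upwards [hv] with s hs
          simp [hs]
  · rw [ContinuousLinearMap.comp_apply, innerSL_apply_apply, L2.inner_def]
    refine integral_congr_ae ?_
    filter_upwards [hv, coeFn_compL2 (𝕜 := 𝕜) hA hAρ f] with s hvs hfs
    simp [hvs, hfs, mul_comm]

end WeightedComposition

section IntegralOperator

variable {𝕜 S X Y : Type*} [RCLike 𝕜] [MeasurableSpace S] [MeasurableSpace X] [MeasurableSpace Y]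

theorem exists_isCompactOperator_setIntegral_mul_comp {ν : Measure S} {μ : Measure X}
    {ρ : Measure Y} [SFinite ν] [SFinite μ] {D : Set (S × X)} (hD : MeasurableSet D)
    {α : S × X → Y} (hα : Measurable α) {w : S × X → 𝕜} (hw : MemLp w 2 ((ν.prod μ).restrict D))
    {C : ℝ≥0}
    (hαρ : ∀ᵐ x ∂μ, (ν.restrict {s | (s, x) ∈ D}).map (fun s ↦ α (s, x)) ≤ C • ρ) :
    ∃ K : Lp 𝕜 2 ρ →L[𝕜] Lp 𝕜 2 μ, IsCompactOperator K ∧ ∀ f : Lp 𝕜 2 ρ,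
      ∀ᵐ x ∂μ, K f x = ∫ s in {s | (s, x) ∈ D}, w (s, x) * f (α (s, x)) ∂ν := by
  have hslice (x : X) : MeasurableSet {s | (s, x) ∈ D} := measurable_prodMk_right hD
  have hαslice (x : X) : Measurable fun s ↦ α (s, x) := hα.comp measurable_prodMk_right
  have hwD : MemLp (D.indicator w) 2 (ν.prod μ) := (memLp_indicator_iff_restrict hD).2 hw
  have hwsq : Integrable (fun q ↦ ‖D.indicator w q‖ ^ 2) (ν.prod μ) :=
    hwD.integrable_norm_pow two_ne_zero
  have hwslice : ∀ᵐ x ∂μ, MemLp (fun s ↦ w (s, x)) 2 (ν.restrict {s | (s, x) ∈ D}) := by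
    filter_upwards [hwsq.prod_left_ae, hwD.1.prodMk_right] with x hsq hmeas
    exact (memLp_indicator_iff_restrict (hslice x)).1 <|
      (memLp_two_iff_integrable_sq_norm hmeas).2 hsq
  choose! φ hφnorm hφ using fun x (hx : _ ∧ _) ↦
    exists_strongDual_eq_integral_mul_comp (hαslice x).aemeasurable hx.1 (𝕜 := 𝕜) hx.2
  have hφ_ae (f : Lp 𝕜 2 ρ) : (fun x ↦ φ x f) =ᵐ[μ]
      fun x ↦ ∫ s in {s | (s, x) ∈ D}, w (s, x) * f (α (s, x)) ∂ν := by
    filter_upwards [hαρ, hwslice] with x hx hwx using hφ x ⟨hx, hwx⟩ f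
  have hφmeas (f : Lp 𝕜 2 ρ) : AEStronglyMeasurable (fun x ↦ φ x f) μ := by
    have hfα : AEStronglyMeasurable (fun q ↦ D.indicator w q * f (α q)) (ν.prod μ) :=
      hwD.1.mul ((Lp.stronglyMeasurable f).comp_measurable hα).aestronglyMeasurable
    refine hfα.prod_swap.integral_prod_right'.congr ?_
    filter_upwards [hφ_ae f] with x hx
    rw [hx, ← integral_indicator (hslice x)]
    refine integral_congr_ae (.of_forall fun s ↦ ?_)
    by_cases hs : (s, x) ∈ D <;> simp [hs]
  have hφnorm_ae : ∀ᵐ x ∂μ, ‖φ x‖ ^ 2 ≤ C * ∫ s, ‖D.indicator w (s, x)‖ ^ 2 ∂ν := by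
    filter_upwards [hαρ, hwslice] with x hx hwx
    refine (hφnorm x ⟨hx, hwx⟩).trans_eq ?_
    rw [← integral_indicator (hslice x)]
    congr 2 with s
    by_cases hs : (s, x) ∈ D <;> simp [hs]
  obtain ⟨K, hK, hKφ⟩ := exists_isCompactOperator_coeFn_ae_eq hφmeas
    (hwsq.integral_prod_right.const_mul (C : ℝ)) hφnorm_ae
  exact ⟨K, hK, fun f ↦ (hKφ f).trans (hφ_ae f)⟩

end IntegralOperator

section Antilipschitz

theorem restrict_map_le_smul_restrict {S V : Set ℝ} (hS : MeasurableSet S) {A : ℝ → ℝ}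
    (hA : AEMeasurable A (volume.restrict S)) {C : ℝ≥0}
    (hAC : AntilipschitzWith C (S.domRestrict A)) (hV : MapsTo A S V) :
    (volume.restrict S).map A ≤ C • volume.restrict V := by
  refine Measure.le_iff.2 fun T hT ↦ ?_
  have himage : A ⁻¹' T ∩ S = Subtype.val '' (S.domRestrict A ⁻¹' (T ∩ V)) := by
    ext s
    constructor
    · rintro ⟨hT, hs⟩
      exact ⟨⟨s, hs⟩, ⟨hT, hV hs⟩, rfl⟩
    · rintro ⟨⟨s, hs⟩, ⟨hT, -⟩, rfl⟩
      exact ⟨hT, hs⟩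
  calc (volume.restrict S).map A T = volume (A ⁻¹' T ∩ S) := by
        rw [Measure.map_apply_of_aemeasurable hA hT, Measure.restrict_apply' hS]
    _ = μH[1] (S.domRestrict A ⁻¹' (T ∩ V)) := by
        rw [himage, ← hausdorffMeasure_real,
          isometry_subtype_coe.hausdorffMeasure_image (.inl zero_le_one)]
    _ ≤ C * volume (T ∩ V) := by
        simpa [hausdorffMeasure_real] using hAC.hausdorffMeasure_preimage_le zero_le_one (T ∩ V)
    _ = (C • volume.restrict V) T := by
        rw [Measure.smul_apply, Measure.restrict_apply hT, ENNReal.smul_def, smul_eq_mul]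

theorem antilipschitzWith_domRestrict_of_le_abs_hasDerivAt {S : Set ℝ} (hS : S.OrdConnected)
    {A A' : ℝ → ℝ} (hA : ∀ s ∈ S, HasDerivAt A (A' s) s) {c : ℝ≥0} (hc : 0 < c)
    (hcA : ∀ s ∈ S, c ≤ |A' s|) : AntilipschitzWith c⁻¹ (S.domRestrict A) := by
  have mul_dist_le {s t : ℝ} (hs : s ∈ S) (ht : t ∈ S) (hst : s < t) :
      c * dist s t ≤ dist (A s) (A t) := by
    have hsub : Icc s t ⊆ S := hS.out hs ht
    obtain ⟨z, hz, hAz⟩ := exists_hasDerivAt_eq_slope A A' hst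
      (fun r hr ↦ (hA r (hsub hr)).continuousAt.continuousWithinAt)
      fun r hr ↦ hA r (hsub (Ioo_subset_Icc_self hr))
    have hcz := hcA z (hsub (Ioo_subset_Icc_self hz))
    rwa [hAz, abs_div, le_div_iff₀ (abs_pos.2 (sub_pos.2 hst).ne'), ← Real.dist_eq,
      ← Real.dist_eq, dist_comm t, dist_comm (A t)] at hcz
  refine AntilipschitzWith.of_le_mul_dist fun s t ↦ ?_
  rw [NNReal.coe_inv, le_inv_mul_iff₀ (NNReal.coe_pos.2 hc)]
  rcases lt_trichotomy s t with hst | rfl | hts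
  · exact mul_dist_le s.2 t.2 hst
  · simp
  · rw [dist_comm s, dist_comm (S.domRestrict A s)]
    exact mul_dist_le t.2 s.2 hts

end Antilipschitz

section Monotonicity

theorem monotoneOn_or_antitoneOn_of_hasDerivAt_ne_zero {S : Set ℝ} (hS : Convex ℝ S)
    {g g' : ℝ → ℝ} (hg : ∀ s ∈ S, HasDerivAt g (g' s) s) (hg' : ∀ s ∈ S, g' s ≠ 0) :
    MonotoneOn g S ∨ AntitoneOn g S := by
  have hcont : ContinuousOn g S := fun s hs ↦ (hg s hs).continuousAt.continuousWithinAt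
  have hderiv (s) (hs : s ∈ interior S) : HasDerivWithinAt g (g' s) (interior S) s :=
    (hg s (interior_subset hs)).hasDerivWithinAt
  rcases hasDerivWithinAt_forall_lt_or_forall_gt_of_forall_ne hS
    (fun s hs ↦ (hg s hs).hasDerivWithinAt) hg' with hneg | hpos
  · exact .inr <| antitoneOn_of_hasDerivWithinAt_nonpos hS hcont hderiv
      fun s hs ↦ (hneg s (interior_subset hs)).le
  · exact .inl <| monotoneOn_of_hasDerivWithinAt_nonneg hS hcont hderiv
      fun s hs ↦ (hpos s (interior_subset hs)).le

theorem convex_sep_comp_lt {S V : Set ℝ} (hS : Convex ℝ S) {g h : ℝ → ℝ}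
    (hg : MonotoneOn g S ∨ AntitoneOn g S) (hh : MonotoneOn h V ∨ AntitoneOn h V)
    (hgV : MapsTo g S V) (m : ℝ) : Convex ℝ {s ∈ S | h (g s) < m} := by
  rcases hg with hg | hg <;> rcases hh with hh | hh
  · exact (hh.comp hg hgV).convex_lt hS m
  · exact (hh.comp_MonotoneOn hg hgV).convex_lt hS m
  · exact (hh.comp_AntitoneOn hg hgV).convex_lt hS m
  · exact (hh.comp hg hgV).convex_lt hS m

end Monotonicity

section PlanarRegion

theorem isOpen_sep_lt {Z R : Type*} [TopologicalSpace Z] [TopologicalSpace R] [LinearOrder R]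
    [OrderClosedTopology R] {s : Set Z} (hs : IsOpen s) {f g : Z → R} (hf : ContinuousOn f s)
    (hg : ContinuousOn g s) : IsOpen {z ∈ s | f z < g z} :=
  (hf.prodMk hg).isOpen_inter_preimage hs isOpen_lt_prod

theorem exists_measurable_eqOn {Z R : Type*} [TopologicalSpace Z] [MeasurableSpace Z]
    [BorelSpace Z] [TopologicalSpace R] [MeasurableSpace R] [BorelSpace R] [Nonempty R]
    {f : Z → R} {s : Set Z} (hf : ContinuousOn f s) (hs : MeasurableSet s) :
    ∃ g, Measurable g ∧ EqOn g f s := by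
  classical
  let c : Z → R := fun _ ↦ Classical.arbitrary R
  exact ⟨s.piecewise f c, hf.measurable_piecewise continuousOn_const hs, piecewise_eqOn s f c⟩

theorem isOpen_snd_mem_and_fst_mem_Ioo {X R : Type*} [TopologicalSpace X] [TopologicalSpace R]
    [LinearOrder R] [OrderClosedTopology R] {I : Set X} (hI : IsOpen I) {a b : X → R}
    (ha : ContinuousOn a I) (hb : ContinuousOn b I) :
    IsOpen {q : R × X | q.2 ∈ I ∧ q.1 ∈ Ioo (a q.2) (b q.2)} := by
  have hstrip : IsOpen {q : R × X | q.2 ∈ I} := hI.preimage continuous_snd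
  have comp_snd {c : X → R} (hc : ContinuousOn c I) :
      ContinuousOn (fun q : R × X ↦ c q.2) {q | q.2 ∈ I} :=
    hc.comp continuousOn_snd fun _ hq ↦ hq
  simpa only [and_assoc, mem_ofPred_eq, mem_Ioo] using isOpen_sep_lt
    (isOpen_sep_lt hstrip (comp_snd ha) continuousOn_fst) continuousOn_fst
    ((comp_snd hb).mono (sep_subset _ _))

theorem isBounded_snd_mem_and_fst_mem_Icc {X : Type*} [PseudoMetricSpace X] {I : Set X}
    (hI : IsCompact I) {a b : X → ℝ} (ha : ContinuousOn a I) (hb : ContinuousOn b I) :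
    Bornology.IsBounded {q : ℝ × X | q.2 ∈ I ∧ q.1 ∈ Icc (a q.2) (b q.2)} := by
  obtain ⟨m, hm⟩ := hI.bddBelow_image ha
  obtain ⟨M, hM⟩ := hI.bddAbove_image hb
  refine ((Metric.isBounded_Icc m M).prod hI.isBounded).subset fun q ⟨hq, haq, hqb⟩ ↦ ?_
  exact ⟨⟨(hm (mem_image_of_mem a hq)).trans haq, hqb.trans (hM (mem_image_of_mem b hq))⟩, hq⟩

end PlanarRegion

section PartialDerivative

theorem hasDerivAt_comp_mk_of_contDiffOn {E F : Type*} [NormedAddCommGroup E] [NormedSpace ℝ E]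
    [NormedAddCommGroup F] [NormedSpace ℝ F] {g : ℝ × E → F} {W : Set (ℝ × E)} (hW : IsOpen W)
    (hg : ContDiffOn ℝ 1 g W) {s : ℝ} {x : E} (hsx : (s, x) ∈ W) :
    HasDerivAt (fun t ↦ g (t, x)) (fderiv ℝ g (s, x) (1, 0)) s :=
  ((hg.differentiableOn one_ne_zero).differentiableAt (hW.mem_nhds hsx)).hasFDerivAt
    |>.comp_hasDerivAt s ((hasDerivAt_id s).prodMk (hasDerivAt_const s x))

theorem monotoneOn_or_antitoneOn_comp_mk {E : Type*} [NormedAddCommGroup E] [NormedSpace ℝ E]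
    {g : ℝ × E → ℝ} {W : Set (ℝ × E)} (hW : IsOpen W) (hg : ContDiffOn ℝ 1 g W) {S : Set ℝ}
    (hS : Convex ℝ S) {x : E} (hSW : ∀ s ∈ S, (s, x) ∈ W)
    (hg' : ∀ s ∈ S, fderiv ℝ g (s, x) (1, 0) ≠ 0) :
    MonotoneOn (fun s ↦ g (s, x)) S ∨ AntitoneOn (fun s ↦ g (s, x)) S :=
  monotoneOn_or_antitoneOn_of_hasDerivAt_ne_zero hS
    (fun s hs ↦ hasDerivAt_comp_mk_of_contDiffOn hW hg (hSW s hs)) hg'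

theorem exists_pos_le_abs_fderiv_apply {E : Type*} [NormedAddCommGroup E] [NormedSpace ℝ E]
    {g : E → ℝ} {Q W : Set E} (hQ : IsCompact Q) (hW : IsOpen W) (hQW : Q ⊆ W)
    (hg : ContDiffOn ℝ 1 g W) {v : E} (hgv : ∀ q ∈ Q, fderiv ℝ g q v ≠ 0) :
    ∃ c : ℝ≥0, 0 < c ∧ ∀ q ∈ Q, c ≤ |fderiv ℝ g q v| := by
  have hcont : ContinuousOn (fun q ↦ |fderiv ℝ g q v|) Q :=
    (((hg.continuousOn_fderiv_of_isOpen hW le_rfl).mono hQW).clm_apply continuousOn_const).abs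
  obtain ⟨c, hc, hle⟩ := hQ.exists_forall_le' hcont fun q hq ↦ abs_pos.2 (hgv q hq)
  exact ⟨⟨c, hc.le⟩, hc, hle⟩

end PartialDerivative

section RegionOperator

theorem memLp_restrict_of_norm_le {Z F : Type*} [MeasurableSpace Z] [NormedAddCommGroup F]
    {μ : Measure Z} {D : Set Z} (hD : MeasurableSet D) (hμD : μ D < ∞) {p : ℝ≥0∞} {w : Z → F}
    (hw : AEStronglyMeasurable w (μ.restrict D)) {C : ℝ} (hwC : ∀ z ∈ D, ‖w z‖ ≤ C) :
    MemLp w p (μ.restrict D) :=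
  have := isFiniteMeasure_restrict.2 hμD.ne
  MemLp.of_bound hw C (ae_restrict_of_forall_mem hD hwC)

theorem exists_isCompactOperator_setIntegral_mul_comp_of_contDiffOn {𝕜 : Type*} [RCLike 𝕜]
    {μ : Measure ℝ} [SFinite μ] {D W : Set (ℝ × ℝ)} (hD : MeasurableSet D)
    (hDbdd : Bornology.IsBounded D) (hslice : ∀ x, {s | (s, x) ∈ D}.OrdConnected)
    {α : ℝ × ℝ → ℝ} (hW : IsOpen W) (hDW : closure D ⊆ W) (hα : ContDiffOn ℝ 1 α W)
    (hα' : ∀ q ∈ closure D, fderiv ℝ α q (1, 0) ≠ 0) {V : Set ℝ} (hαV : MapsTo α D V)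
    {w : ℝ × ℝ → 𝕜} (hw : MemLp w 2 ((volume.prod μ).restrict D)) :
    ∃ K : Lp 𝕜 2 (volume.restrict V) →L[𝕜] Lp 𝕜 2 μ, IsCompactOperator K ∧
      ∀ f : Lp 𝕜 2 (volume.restrict V),
        ∀ᵐ x ∂μ, K f x = ∫ s in {s | (s, x) ∈ D}, w (s, x) * f (α (s, x)) := by
  have hslice_meas (x : ℝ) : MeasurableSet {s | (s, x) ∈ D} := measurable_prodMk_right hD
  obtain ⟨c, hc, hcα⟩ := exists_pos_le_abs_fderiv_apply hDbdd.isCompact_closure hW hDW hα hα'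
  obtain ⟨A, hA_meas, hA_eq⟩ :=
    exists_measurable_eqOn (hα.continuousOn.mono (subset_closure.trans hDW)) hD
  have map_le (x : ℝ) : (volume.restrict {s | (s, x) ∈ D}).map (fun s ↦ A (s, x)) ≤
      c⁻¹ • volume.restrict V := by
    have hAx : Measurable fun s ↦ A (s, x) := hA_meas.comp measurable_prodMk_right
    have hAx_eq : EqOn (fun s ↦ A (s, x)) (fun s ↦ α (s, x)) {s | (s, x) ∈ D} :=
      fun s hs ↦ hA_eq hs
    refine restrict_map_le_smul_restrict (hslice_meas x) hAx.aemeasurable ?_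
      (MapsTo.congr (fun s hs ↦ hαV hs) hAx_eq.symm)
    rw [domRestrict_eq_domRestrict_iff.2 hAx_eq]
    exact antilipschitzWith_domRestrict_of_le_abs_hasDerivAt (hslice x)
      (fun s hs ↦ hasDerivAt_comp_mk_of_contDiffOn hW hα (hDW (subset_closure hs))) hc
      fun s hs ↦ hcα _ (subset_closure hs)
  obtain ⟨K, hK, hKf⟩ :=
    exists_isCompactOperator_setIntegral_mul_comp hD hA_meas hw (.of_forall map_le)
  refine ⟨K, hK, fun f ↦ ?_⟩
  filter_upwards [hKf f] with x hx
  rw [hx]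
  exact setIntegral_congr_fun (hslice_meas x) fun s hs ↦ by simp only [hA_eq hs]

theorem exists_isCompactOperator_setIntegral_sep_comp_lt {𝕜 : Type*} [RCLike 𝕜] {μ : Measure ℝ}
    [IsLocallyFiniteMeasure μ] {Ω : Set (ℝ × ℝ)} (hΩ : IsOpen Ω)
    (hΩbdd : Bornology.IsBounded Ω) (hΩslice : ∀ x, Convex ℝ {s | (s, x) ∈ Ω})
    {β : ℝ × ℝ → ℝ} (hβ : ContinuousOn β Ω) {V : Set ℝ} (hβV : MapsTo β Ω V)
    (hβmono : ∀ x, MonotoneOn (fun s ↦ β (s, x)) {s | (s, x) ∈ Ω} ∨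
      AntitoneOn (fun s ↦ β (s, x)) {s | (s, x) ∈ Ω})
    {f₁ f₂ : ℝ → ℝ} (hf₁ : ContinuousOn f₁ V) (hf₁mono : MonotoneOn f₁ V ∨ AntitoneOn f₁ V)
    (hf₂ : ContinuousOn f₂ (Prod.snd '' Ω)) {Ω' : Set (ℝ × ℝ)}
    (hΩ' : Ω' = {q ∈ Ω | f₁ (β q) < f₂ q.2}) {α : ℝ × ℝ → ℝ} {W : Set (ℝ × ℝ)} (hW : IsOpen W)
    (hΩ'W : closure Ω' ⊆ W) (hα : ContDiffOn ℝ 1 α W)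
    (hα' : ∀ q ∈ closure Ω', fderiv ℝ α q (1, 0) ≠ 0) {V' : Set ℝ} (hαV' : MapsTo α Ω' V')
    {k : ℝ → 𝕜} (hk : Measurable k) {C : ℝ} (hkC : ∀ ξ ∈ V, ‖k ξ‖ ≤ C) :
    ∃ K : Lp 𝕜 2 (volume.restrict V') →L[𝕜] Lp 𝕜 2 μ, IsCompactOperator K ∧
      ∀ f : Lp 𝕜 2 (volume.restrict V'),
        ∀ᵐ x ∂μ, K f x = ∫ s in {s | (s, x) ∈ Ω'}, k (β (s, x)) * f (α (s, x)) := by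
  have hΩ'Ω : Ω' ⊆ Ω := hΩ' ▸ sep_subset _ _
  have hΩ'meas : MeasurableSet Ω' := by
    rw [hΩ']
    exact (isOpen_sep_lt hΩ (hf₁.comp hβ hβV)
      (hf₂.comp continuousOn_snd (mapsTo_image _ _))).measurableSet
  have hΩ'bdd : Bornology.IsBounded Ω' := hΩbdd.subset hΩ'Ω
  have hslice (x : ℝ) : {s | (s, x) ∈ Ω'}.OrdConnected := by
    rw [hΩ']
    exact (convex_sep_comp_lt (hΩslice x) (hβmono x) hf₁mono (fun s hs ↦ hβV hs)
      (f₂ x)).ordConnected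
  have hw : MemLp (fun q ↦ k (β q)) 2 ((volume.prod μ).restrict Ω') :=
    memLp_restrict_of_norm_le hΩ'meas hΩ'bdd.measure_lt_top
      (hk.comp_aemeasurable ((hβ.mono hΩ'Ω).aemeasurable hΩ'meas)).aestronglyMeasurable
      fun q hq ↦ hkC _ (hβV (hΩ'Ω hq))
  exact exists_isCompactOperator_setIntegral_mul_comp_of_contDiffOn hΩ'meas hΩ'bdd hslice hW hΩ'W
    hα hα' hαV' hw

end RegionOperator

theorem integral_operator_compact_general
    (a b : ℝ → ℝ) (ha : ContinuousOn a (Icc 0 1)) (hb : ContinuousOn b (Icc 0 1))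
    (Ω : Set (ℝ × ℝ))
    (hΩ : Ω = {q : ℝ × ℝ | q.2 ∈ Ioo (0 : ℝ) 1 ∧ a q.2 < b q.2 ∧ q.1 ∈ Ioo (a q.2) (b q.2)})
    (β : ℝ × ℝ → ℝ) (hβ : ContinuousOn β Ω) (hβmaps : ∀ q ∈ Ω, β q ∈ Ioo (0 : ℝ) 1)
    (hβmono : ∀ x ∈ Ioo (0 : ℝ) 1, MonotoneOn (fun s ↦ β (s, x)) (Ioo (a x) (b x)) ∨
      AntitoneOn (fun s ↦ β (s, x)) (Ioo (a x) (b x)))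
    (f₁ f₂ : ℝ → ℝ) (hf₁ : ContinuousOn f₁ (Ioo 0 1)) (hf₂ : ContinuousOn f₂ (Ioo 0 1))
    (hf₁mono : MonotoneOn f₁ (Ioo 0 1) ∨ AntitoneOn f₁ (Ioo 0 1))
    (J : ℝ → Set ℝ)
    (hJ : ∀ x, J x =
      if a x < b x then {s : ℝ | s ∈ Ioo (a x) (b x) ∧ f₁ (β (s, x)) < f₂ x} else ∅)
    (Ω' : Set (ℝ × ℝ)) (hΩ' : Ω' = {q : ℝ × ℝ | q.2 ∈ Ioo (0 : ℝ) 1 ∧ q.1 ∈ J q.2})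
    (α : ℝ × ℝ → ℝ) (U' : Set (ℝ × ℝ)) (hU' : IsOpen U') (hU'Ω : closure Ω' ⊆ U')
    (hαC1 : ContDiffOn ℝ 1 α U') (hαmaps : ∀ q ∈ Ω', α q ∈ Ioo (0 : ℝ) 1)
    (hαs : ∀ q ∈ closure Ω', fderiv ℝ α q (1, 0) ≠ 0)
    (k : ℝ → ℝ) (hk : Measurable k) (Ck : ℝ) (hkbdd : ∀ ξ ∈ Ioo (0 : ℝ) 1, |k ξ| ≤ Ck) :
    ∃ K : Lp ℝ 2 (volume.restrict (Ioo (0 : ℝ) 1)) →L[ℝ] Lp ℝ 2 (volume.restrict (Ioo (0 : ℝ) 1)),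
      IsCompactOperator K ∧
        ∀ f : Lp ℝ 2 (volume.restrict (Ioo (0 : ℝ) 1)),
          ∀ᵐ x ∂(volume.restrict (Ioo (0 : ℝ) 1)),
            (K f : ℝ → ℝ) x = ∫ s in J x, k (β (s, x)) * (f : ℝ → ℝ) (α (s, x)) := by
  have hΩIoo : Ω = {q | q.2 ∈ Ioo (0 : ℝ) 1 ∧ q.1 ∈ Ioo (a q.2) (b q.2)} := by
    rw [hΩ]
    exact Set.ext fun q ↦ and_congr_right fun _ ↦ and_iff_right_of_imp fun hq ↦ hq.1.trans hq.2
  have J_eq (x : ℝ) : J x = {s ∈ Ioo (a x) (b x) | f₁ (β (s, x)) < f₂ x} := by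
    rw [hJ]
    split_ifs with hab
    · rfl
    · simp [Ioo_eq_empty hab]
  have hΩ'_sep : Ω' = {q ∈ Ω | f₁ (β q) < f₂ q.2} := by
    ext q
    simp only [hΩ', J_eq, hΩIoo, mem_ofPred_eq, and_assoc]
  have hΩopen : IsOpen Ω := hΩIoo ▸ isOpen_snd_mem_and_fst_mem_Ioo isOpen_Ioo
    (ha.mono Ioo_subset_Icc_self) (hb.mono Ioo_subset_Icc_self)
  have hΩbdd : Bornology.IsBounded Ω := by
    rw [hΩIoo]
    exact (isBounded_snd_mem_and_fst_mem_Icc isCompact_Icc ha hb).subset fun q hq ↦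
      ⟨Ioo_subset_Icc_self hq.1, Ioo_subset_Icc_self hq.2⟩
  have hf₂Ω : ContinuousOn f₂ (Prod.snd '' Ω) :=
    hf₂.mono (image_subset_iff.2 fun q hq ↦ (hΩIoo ▸ hq :).1)
  have hslice (x : ℝ) : Convex ℝ {s | (s, x) ∈ Ω} ∧
      (MonotoneOn (fun s ↦ β (s, x)) {s | (s, x) ∈ Ω} ∨
        AntitoneOn (fun s ↦ β (s, x)) {s | (s, x) ∈ Ω}) := by
    by_cases hx : x ∈ Ioo (0 : ℝ) 1
    · simpa only [hΩIoo, mem_ofPred_eq, hx, true_and, ofPred_mem_eq] using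
        ⟨convex_Ioo _ _, hβmono x hx⟩
    · have hempty : {s | (s, x) ∈ Ω} = ∅ := by
        simp only [hΩIoo, mem_ofPred_eq, hx, false_and, ofPred_false]
      exact hempty ▸ ⟨convex_empty, .inl (subsingleton_empty.monotoneOn _)⟩
  obtain ⟨K, hK, hKf⟩ := exists_isCompactOperator_setIntegral_sep_comp_lt
    (μ := volume.restrict (Ioo (0 : ℝ) 1)) hΩopen hΩbdd (fun x ↦ (hslice x).1) hβ hβmaps
    (fun x ↦ (hslice x).2) hf₁ hf₁mono hf₂Ω hΩ'_sep hU' hU'Ω hαC1 hαs hαmaps hk hkbdd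
  refine ⟨K, hK, fun f ↦ ?_⟩
  filter_upwards [hKf f, ae_restrict_mem measurableSet_Ioo] with x hx hxI
  simpa only [hΩ', mem_ofPred_eq, hxI, true_and, ofPred_mem_eq] using hx

/-- The integral operators `Kf(x) = ∫_{J(x)} k(β(s,x)) f(α(s,x)) ds` arising from the
method of characteristics define bounded linear operators on `L²(0,1)` which are
compact. -/
theorem integral_operator_compact
    (a b : ℝ → ℝ) (Ka Kb : NNReal)
    (ha : LipschitzOnWith Ka a (Set.Icc 0 1))
    (hb : LipschitzOnWith Kb b (Set.Icc 0 1))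
    (Ω : Set (ℝ × ℝ))
    (hΩ : Ω = {q : ℝ × ℝ |
      q.2 ∈ Set.Ioo (0 : ℝ) 1 ∧ a q.2 < b q.2 ∧ q.1 ∈ Set.Ioo (a q.2) (b q.2)})
    (hΩne : Ω.Nonempty)
    (β : ℝ × ℝ → ℝ) (U : Set (ℝ × ℝ)) (hU : IsOpen U) (hUΩ : closure Ω ⊆ U)
    (hβC1 : ContDiffOn ℝ 1 β U)
    (hβmaps : ∀ q ∈ Ω, β q ∈ Set.Ioo (0 : ℝ) 1)
    (hβs : ∀ q ∈ closure Ω, fderiv ℝ β q (1, 0) ≠ 0)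
    (f₁ f₂ : ℝ → ℝ) (f₁' f₂' : ℝ → ℝ) (K₁ K₂ : NNReal)
    (hf₁ : ∀ x ∈ Set.Icc (0 : ℝ) 1, HasDerivAt f₁ (f₁' x) x)
    (hf₂ : ∀ x ∈ Set.Icc (0 : ℝ) 1, HasDerivAt f₂ (f₂' x) x)
    (hf₁lip : LipschitzOnWith K₁ f₁' (Set.Icc 0 1))
    (hf₂lip : LipschitzOnWith K₂ f₂' (Set.Icc 0 1))
    (hf₁sign : (∀ x ∈ Set.Icc (0 : ℝ) 1, 0 < f₁' x) ∨ (∀ x ∈ Set.Icc (0 : ℝ) 1, f₁' x < 0))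
    (J : ℝ → Set ℝ)
    (hJ : ∀ x, J x =
      if a x < b x then {s : ℝ | s ∈ Set.Ioo (a x) (b x) ∧ f₁ (β (s, x)) < f₂ x} else ∅)
    (Ω' : Set (ℝ × ℝ))
    (hΩ' : Ω' = {q : ℝ × ℝ | q.2 ∈ Set.Ioo (0 : ℝ) 1 ∧ q.1 ∈ J q.2})
    (α : ℝ × ℝ → ℝ) (U' : Set (ℝ × ℝ)) (hU' : IsOpen U') (hU'Ω : closure Ω' ⊆ U')
    (hαC1 : ContDiffOn ℝ 1 α U')
    (hαmaps : ∀ q ∈ Ω', α q ∈ Set.Ioo (0 : ℝ) 1)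
    (hαs : ∀ q ∈ closure Ω', fderiv ℝ α q (1, 0) ≠ 0)
    (k : ℝ → ℝ) (hk : Measurable k)
    (Ck : ℝ) (hkbdd : ∀ ξ ∈ Set.Ioo (0 : ℝ) 1, |k ξ| ≤ Ck) :
    ∃ K : Lp ℝ 2 (volume.restrict (Set.Ioo (0 : ℝ) 1)) →L[ℝ]
        Lp ℝ 2 (volume.restrict (Set.Ioo (0 : ℝ) 1)),
      IsCompactOperator K ∧
        ∀ f : Lp ℝ 2 (volume.restrict (Set.Ioo (0 : ℝ) 1)),
          ∀ᵐ x ∂(volume.restrict (Set.Ioo (0 : ℝ) 1)),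
            (K f : ℝ → ℝ) x = ∫ s in J x, k (β (s, x)) * (f : ℝ → ℝ) (α (s, x)) :=
  have hIcc : Ioo (0 : ℝ) 1 ⊆ Icc 0 1 := Ioo_subset_Icc_self
  integral_operator_compact_general a b ha.continuousOn hb.continuousOn Ω hΩ β
    (hβC1.continuousOn.mono (subset_closure.trans hUΩ)) hβmaps
    (fun x hx ↦
      have mem_closure (s) (hs : s ∈ Ioo (a x) (b x)) : (s, x) ∈ closure Ω :=
        subset_closure (hΩ ▸ ⟨hx, hs.1.trans hs.2, hs⟩)
      monotoneOn_or_antitoneOn_comp_mk hU hβC1 (convex_Ioo _ _)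
        (fun s hs ↦ hUΩ (mem_closure s hs)) fun s hs ↦ hβs _ (mem_closure s hs))
    f₁ f₂ (fun x hx ↦ (hf₁ x (hIcc hx)).continuousAt.continuousWithinAt)
    (fun x hx ↦ (hf₂ x (hIcc hx)).continuousAt.continuousWithinAt)
    (monotoneOn_or_antitoneOn_of_hasDerivAt_ne_zero (convex_Ioo _ _) (fun x hx ↦ hf₁ x (hIcc hx))
      fun x hx ↦ hf₁sign.elim (fun h ↦ (h x (hIcc hx)).ne') fun h ↦ (h x (hIcc hx)).ne)
    J hJ Ω' hΩ' α U' hU' hU'Ω hαC1 hαmaps hαs k hk Ck hkbdd
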